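/- Difference of the left and right time interpolants: for all T > 0, L ≥ 0, g₀ ≥ 0, A > 0 and B ≥ 0 there exists a constant C ≥ 0, depending only on T, L, g₀, A, B, such that for every N ≥ 1, every discrete setting (V, m, τ) with Σ_{K∈V} m K ≤ A, every g Lipschitz with constant L and |g(0)| ≤ g₀, and every initial datum with E[‖u⁰‖_m²] ≤ B, the scheme solution satisfies Δt·Σ_{n=0}^{N−1} E[‖u^{n+1} − u^n‖_m²] ≤ C·Δt; equivalently E[∫₀^T ‖u^r(t) − u^l(t)‖_m² dt] ≤ C·Δt, so that the two interpolants coincide in the limit Δt → 0. -/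

import Mathlib

open MeasureTheory ProbabilityTheory

/-- Discrete `L²` norm squared: `‖w‖_m² = Σ_K m K · (w K)²`. -/
noncomputable def normSq {V : Type} [Fintype V] (m : V → ℝ) (w : V → ℝ) : ℝ :=
  ∑ K, m K * w K ^ 2

/-- Discrete `H¹` seminorm squared: `|w|₁² = (1/2) Σ_K Σ_L τ K L · (w K − w L)²`. -/
noncomputable def seminormSq {V : Type} [Fintype V] (τ : V → V → ℝ) (w : V → ℝ) : ℝ :=
  (1 / 2) * ∑ K, ∑ L, τ K L * (w K - w L) ^ 2

/-- The semi-implicit finite-volume scheme for the stochastic heat equation, in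
abstract graph form, together with all the structural assumptions of the paper:
cell measures `m`, symmetric nonnegative transmissibilities `τ`, time horizon
`T > 0` divided into `N ≥ 1` steps of size `Δt = T/N`, a discrete filtration
`G`, Gaussian increments `ΔW` (each `ΔW (n+1)` is `G (n+1)`-measurable,
independent of `G n`, centred with variance `Δt`), a Lipschitz nonlinearity `g`
(constant `L`), a square-integrable `G 0`-measurable initial datum `u 0`, and the
scheme equations defining `u (n+1)` from `u n`. -/
structure Scheme (V : Type) [Fintype V] [Nonempty V]
    (Ω : Type) [mΩ : MeasurableSpace Ω]
    (T L : ℝ) (g : ℝ → ℝ) (N : ℕ) where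
  P : Measure Ω
  probP : IsProbabilityMeasure P
  m : V → ℝ
  m_pos : ∀ K, 0 < m K
  τ : V → V → ℝ
  τ_symm : ∀ K L', τ K L' = τ L' K
  τ_nonneg : ∀ K L', 0 ≤ τ K L'
  τ_diag : ∀ K, τ K K = 0
  T_pos : 0 < T
  N_pos : 1 ≤ N
  L_nonneg : 0 ≤ L
  g_lip : ∀ r s : ℝ, |g r - g s| ≤ L * |r - s|
  G : ℕ → MeasurableSpace Ω
  G_le : ∀ n, G n ≤ mΩ
  G_mono : Monotone G
  ΔW : ℕ → Ω → ℝ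
  ΔW_meas : ∀ n, n < N → Measurable[G (n + 1)] (ΔW (n + 1))
  ΔW_indep : ∀ n, n < N →
    Indep (MeasurableSpace.comap (ΔW (n + 1)) Real.measurableSpace) (G n) P
  ΔW_law : ∀ n, n < N →
    P.map (ΔW (n + 1)) = gaussianReal 0 (Real.toNNReal (T / N))
  u : ℕ → Ω → V → ℝ
  u_meas : ∀ n, n ≤ N → Measurable[G n] (u n)
  u0_int : Integrable (fun ω => normSq m (u 0 ω)) P
  scheme : ∀ n, n < N → ∀ᵐ ω ∂P, ∀ K,
    m K / (T / N) * (u (n + 1) ω K - u n ω K)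
      + ∑ L', τ K L' * (u (n + 1) ω K - u (n + 1) ω L')
      = m K / (T / N) * g (u n ω K) * ΔW (n + 1) ω

/-!
Testing the scheme with `u^{n+1}` gives the energy identity
`|u^{n+1}|² + |u^{n+1} - u^n|² + 2 Δt |u^{n+1}|₁² = |u^n|² + 2 ⟨f, u^{n+1}⟩`, where
`f = g(u^n) ΔW_{n+1}`. The noise is independent of `u^n` but not of `u^{n+1}`, so one writes
`⟨f, u^{n+1}⟩ = ⟨f, u^n⟩ + ⟨f, u^{n+1} - u^n⟩`: the first term has mean zero, and Young's inequality
absorbs half of `|u^{n+1} - u^n|²` from the second at the price of `2 |f|²`, whose mean is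
`2 Δt E|g(u^n)|²`. The discrete Grönwall inequality, applied to `E|u^n|²` plus the increments
accumulated so far, bounds the sum of the increments.
-/

lemma measurable_comp_left {ι α β : Type*} [MeasurableSpace α] [MeasurableSpace β] {g : α → β}
    (hg : Measurable g) : Measurable fun w : ι → α => g ∘ w :=
  measurable_pi_lambda _ fun i => hg.comp (measurable_pi_apply i)

lemma sq_le_of_lipschitzWith {C : NNReal} {g : ℝ → ℝ} (hg : LipschitzWith C g) (r : ℝ) :
    g r ^ 2 ≤ 2 * C ^ 2 * r ^ 2 + 2 * g 0 ^ 2 := by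
  have hdiff : (g r - g 0) ^ 2 ≤ C ^ 2 * r ^ 2 := by
    rw [← mul_pow, sq_le_sq, abs_mul, NNReal.abs_eq]
    simpa [Real.dist_eq] using hg.dist_le_mul r 0
  linarith [add_sq_le (a := g r - g 0) (b := g 0), congrArg (· ^ 2) (sub_add_cancel (g r) (g 0))]

section WeightedNorm

variable {V : Type} [Fintype V] {m : V → ℝ}

/-- The inner product `⟨v, w⟩_m = Σ_K m K · v K · w K` whose quadratic form is `normSq m`. -/
noncomputable def massInner (m v w : V → ℝ) : ℝ :=
  ∑ K, m K * v K * w K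

lemma normSq_nonneg (hm : ∀ K, 0 ≤ m K) (w : V → ℝ) : 0 ≤ normSq m w :=
  Finset.sum_nonneg fun K _ => mul_nonneg (hm K) (sq_nonneg _)

lemma normSq_smul (m : V → ℝ) (c : ℝ) (w : V → ℝ) : normSq m (c • w) = c ^ 2 * normSq m w := by
  simp only [normSq, Pi.smul_apply, smul_eq_mul, Finset.mul_sum]
  exact Finset.sum_congr rfl fun K _ => by ring

lemma massInner_smul_left (m : V → ℝ) (c : ℝ) (v w : V → ℝ) :
    massInner m (c • v) w = c * massInner m v w := by
  simp only [massInner, Pi.smul_apply, smul_eq_mul, Finset.mul_sum]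
  exact Finset.sum_congr rfl fun K _ => by ring

lemma massInner_sub_right (m v w z : V → ℝ) :
    massInner m v (w - z) = massInner m v w - massInner m v z := by
  simp only [massInner, Pi.sub_apply, mul_sub, Finset.sum_sub_distrib]

lemma two_mul_massInner_sub_self (m a b : V → ℝ) :
    2 * massInner m (a - b) a = normSq m a + normSq m (a - b) - normSq m b := by
  simp only [massInner, normSq, Pi.sub_apply, Finset.mul_sum, ← Finset.sum_add_distrib,
    ← Finset.sum_sub_distrib]
  exact Finset.sum_congr rfl fun K _ => by ring

lemma two_mul_abs_massInner_le (hm : ∀ K, 0 ≤ m K) (v w : V → ℝ) {ε : ℝ} (hε : 0 < ε) :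
    2 * |massInner m v w| ≤ ε * normSq m v + ε⁻¹ * normSq m w := by
  calc 2 * |massInner m v w|
      ≤ 2 * ∑ K, |m K * v K * w K| := by gcongr; exact Finset.abs_sum_le_sum_abs _ _
    _ = ∑ K, m K * (2 * |v K| * |w K|) := by
        rw [Finset.mul_sum]
        refine Finset.sum_congr rfl fun K _ => ?_
        rw [abs_mul, abs_mul, abs_of_nonneg (hm K)]
        ring
    _ ≤ ∑ K, m K * (ε * v K ^ 2 + ε⁻¹ * w K ^ 2) := by
        refine Finset.sum_le_sum fun K _ => mul_le_mul_of_nonneg_left ?_ (hm K)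
        simpa only [sq_abs] using two_mul_le_add_mul_sq (a := |v K|) (b := |w K|) hε
    _ = ε * normSq m v + ε⁻¹ * normSq m w := by
        simp only [normSq, Finset.mul_sum, ← Finset.sum_add_distrib]
        exact Finset.sum_congr rfl fun K _ => by ring

lemma measurable_normSq (m : V → ℝ) : Measurable (normSq m) := by
  unfold normSq
  fun_prop

lemma measurable_massInner (m : V → ℝ) :
    Measurable fun p : (V → ℝ) × (V → ℝ) => massInner m p.1 p.2 := by
  unfold massInner
  fun_prop

lemma normSq_comp_le_of_lipschitzWith (hm : ∀ K, 0 ≤ m K) {C : NNReal} {g : ℝ → ℝ}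
    (hg : LipschitzWith C g) (w : V → ℝ) :
    normSq m (g ∘ w) ≤ 2 * C ^ 2 * normSq m w + 2 * g 0 ^ 2 * ∑ K, m K := by
  simp only [normSq, Finset.mul_sum, ← Finset.sum_add_distrib]
  refine Finset.sum_le_sum fun K _ => ?_
  calc m K * g (w K) ^ 2 ≤ m K * (2 * C ^ 2 * w K ^ 2 + 2 * g 0 ^ 2) :=
        mul_le_mul_of_nonneg_left (sq_le_of_lipschitzWith hg _) (hm K)
    _ = 2 * C ^ 2 * (m K * w K ^ 2) + 2 * g 0 ^ 2 * m K := by ring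

end WeightedNorm

section EnergyEstimate

variable {V : Type} [Fintype V] {m : V → ℝ} {τ : V → V → ℝ} {a b f : V → ℝ} {δ : ℝ}

lemma seminormSq_nonneg (hτ : ∀ K L, 0 ≤ τ K L) (w : V → ℝ) : 0 ≤ seminormSq τ w :=
  mul_nonneg (by norm_num) <| Finset.sum_nonneg fun K _ => Finset.sum_nonneg fun L _ =>
    mul_nonneg (hτ K L) (sq_nonneg _)

lemma sum_flux_mul_self_eq_seminormSq (hτ : ∀ K L, τ K L = τ L K) (w : V → ℝ) :
    ∑ K, (∑ L, τ K L * (w K - w L)) * w K = seminormSq τ w := by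
  have hswap : ∑ K, ∑ L, τ K L * (w K - w L) * w K = ∑ K, ∑ L, τ K L * (w L - w K) * w L := by
    rw [Finset.sum_comm]
    simp only [hτ]
  have hsum : ∑ K, ∑ L, τ K L * (w K - w L) ^ 2 =
      ∑ K, ∑ L, τ K L * (w K - w L) * w K + ∑ K, ∑ L, τ K L * (w L - w K) * w L := by
    simp only [← Finset.sum_add_distrib]
    exact Finset.sum_congr rfl fun K _ => Finset.sum_congr rfl fun L _ => by ring
  rw [seminormSq, hsum, ← hswap]
  simp only [Finset.sum_mul]
  ring

lemma energy_identity (hτ : ∀ K L, τ K L = τ L K) (hδ : δ ≠ 0)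
    (hstep : ∀ K, m K / δ * (a K - b K) + ∑ L, τ K L * (a K - a L) = m K / δ * f K) :
    normSq m a + normSq m (a - b) + 2 * δ * seminormSq τ a =
      normSq m b + 2 * massInner m f a := by
  have htested : massInner m (a - b) a + δ * seminormSq τ a = massInner m f a := by
    rw [← sum_flux_mul_self_eq_seminormSq hτ]
    simp only [massInner, Pi.sub_apply, Finset.mul_sum, ← Finset.sum_add_distrib]
    refine Finset.sum_congr rfl fun K _ => ?_
    calc m K * (a K - b K) * a K + δ * ((∑ L, τ K L * (a K - a L)) * a K)
        = δ * (m K / δ * (a K - b K) + ∑ L, τ K L * (a K - a L)) * a K := by field_simp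
      _ = m K * f K * a K := by rw [hstep K]; field_simp
  linarith [two_mul_massInner_sub_self m a b]

lemma energy_inequality (hm : ∀ K, 0 ≤ m K) (hτ_symm : ∀ K L, τ K L = τ L K)
    (hτ_nonneg : ∀ K L, 0 ≤ τ K L) (hδ : 0 < δ)
    (hstep : ∀ K, m K / δ * (a K - b K) + ∑ L, τ K L * (a K - a L) = m K / δ * f K) :
    normSq m a + 1 / 2 * normSq m (a - b) ≤
      normSq m b + 2 * normSq m f + 2 * massInner m f b := by
  have hidentity := energy_identity hτ_symm hδ.ne' hstep
  have hdissipation : 0 ≤ 2 * δ * seminormSq τ a :=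
    mul_nonneg (by positivity) (seminormSq_nonneg hτ_nonneg a)
  have hyoung : 2 * massInner m f (a - b) ≤ 2 * normSq m f + 2⁻¹ * normSq m (a - b) :=
    (mul_le_mul_of_nonneg_left (le_abs_self _) two_pos.le).trans
      (two_mul_abs_massInner_le hm f (a - b) two_pos)
  rw [massInner_sub_right] at hyoung
  linarith

end EnergyEstimate

section MeanSquare

variable {V : Type} [Fintype V] {m : V → ℝ} {Ω : Type*} [MeasurableSpace Ω] {μ : Measure Ω}
  {W : Ω → ℝ} {a b f h : Ω → V → ℝ}

lemma integrable_massInner (hm : ∀ K, 0 ≤ m K) (hf : Measurable f) (hb : Measurable b)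
    (hf_int : Integrable (fun ω => normSq m (f ω)) μ)
    (hb_int : Integrable (fun ω => normSq m (b ω)) μ) :
    Integrable (fun ω => massInner m (f ω) (b ω)) μ := by
  refine (hf_int.add hb_int).mono'
    ((measurable_massInner m).comp (hf.prodMk hb)).aestronglyMeasurable (ae_of_all _ fun ω => ?_)
  have hyoung := two_mul_abs_massInner_le hm (f ω) (b ω) one_pos
  simp only [inv_one, one_mul] at hyoung
  rw [Real.norm_eq_abs, Pi.add_apply]
  linarith [abs_nonneg (massInner m (f ω) (b ω))]

lemma integrable_normSq_comp_of_lipschitzWith [IsFiniteMeasure μ] (hm : ∀ K, 0 ≤ m K)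
    {C : NNReal} {g : ℝ → ℝ} (hg : LipschitzWith C g) (hb : Measurable b)
    (hb_int : Integrable (fun ω => normSq m (b ω)) μ) :
    Integrable (fun ω => normSq m (g ∘ b ω)) μ := by
  have hbound_int : Integrable
      (fun ω => 2 * C ^ 2 * normSq m (b ω) + 2 * g 0 ^ 2 * ∑ K, m K) μ :=
    (hb_int.const_mul _).add (integrable_const _)
  refine hbound_int.mono' ((measurable_normSq m).comp
    ((measurable_comp_left hg.continuous.measurable).comp hb)).aestronglyMeasurable
    (ae_of_all _ fun ω => ?_)
  rw [Real.norm_of_nonneg (normSq_nonneg hm _)]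
  exact normSq_comp_le_of_lipschitzWith hm hg (b ω)

lemma integral_normSq_comp_le_of_lipschitzWith [IsProbabilityMeasure μ] (hm : ∀ K, 0 ≤ m K)
    {C : NNReal} {g : ℝ → ℝ} (hg : LipschitzWith C g) (hb : Measurable b)
    (hb_int : Integrable (fun ω => normSq m (b ω)) μ) :
    ∫ ω, normSq m (g ∘ b ω) ∂μ ≤
      2 * C ^ 2 * (∫ ω, normSq m (b ω) ∂μ) + 2 * g 0 ^ 2 * ∑ K, m K := by
  calc ∫ ω, normSq m (g ∘ b ω) ∂μ
      ≤ ∫ ω, (2 * C ^ 2 * normSq m (b ω) + 2 * g 0 ^ 2 * ∑ K, m K) ∂μ :=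
        integral_mono (integrable_normSq_comp_of_lipschitzWith hm hg hb hb_int)
          ((hb_int.const_mul _).add (integrable_const _))
          fun ω => normSq_comp_le_of_lipschitzWith hm hg (b ω)
    _ = 2 * C ^ 2 * (∫ ω, normSq m (b ω) ∂μ) + 2 * g 0 ^ 2 * ∑ K, m K := by
        rw [integral_add (hb_int.const_mul _) (integrable_const _), integral_const_mul,
          integral_const, probReal_univ, one_smul]

lemma integrable_normSq_smul (hindep : IndepFun W h μ) (hW : MemLp W 2 μ)
    (hh_int : Integrable (fun ω => normSq m (h ω)) μ) :
    Integrable (fun ω => normSq m (W ω • h ω)) μ := by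
  simp only [normSq_smul]
  exact (hindep.comp (measurable_id.pow_const 2) (measurable_normSq m)).integrable_mul
    hW.integrable_sq hh_int

lemma integral_normSq_smul (hindep : IndepFun W h μ) (hW : AEStronglyMeasurable W μ)
    (hh : Measurable h) :
    ∫ ω, normSq m (W ω • h ω) ∂μ = (∫ ω, W ω ^ 2 ∂μ) * ∫ ω, normSq m (h ω) ∂μ := by
  simp only [normSq_smul]
  exact (hindep.comp (measurable_id.pow_const 2)
    (measurable_normSq m)).integral_fun_mul_eq_mul_integral (hW.pow 2)
    ((measurable_normSq m).comp hh).aestronglyMeasurable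

lemma integral_massInner_smul_left (hindep : IndepFun W (fun ω => (h ω, b ω)) μ)
    (hW : AEStronglyMeasurable W μ) (hh : Measurable h) (hb : Measurable b) :
    ∫ ω, massInner m (W ω • h ω) (b ω) ∂μ =
      (∫ ω, W ω ∂μ) * ∫ ω, massInner m (h ω) (b ω) ∂μ := by
  simp only [massInner_smul_left]
  exact (hindep.comp measurable_id (measurable_massInner m)).integral_fun_mul_eq_mul_integral hW
    ((measurable_massInner m).comp (hh.prodMk hb)).aestronglyMeasurable

lemma integrable_normSq_and_integral_energy_le (hm : ∀ K, 0 ≤ m K) (ha : Measurable a)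
    (hb : Measurable b) (hf : Measurable f)
    (hb_int : Integrable (fun ω => normSq m (b ω)) μ)
    (hf_int : Integrable (fun ω => normSq m (f ω)) μ)
    (horth : ∫ ω, massInner m (f ω) (b ω) ∂μ = 0)
    (henergy : ∀ᵐ ω ∂μ, normSq m (a ω) + 1 / 2 * normSq m (a ω - b ω) ≤
      normSq m (b ω) + 2 * normSq m (f ω) + 2 * massInner m (f ω) (b ω)) :
    Integrable (fun ω => normSq m (a ω)) μ ∧
      (∫ ω, normSq m (a ω) ∂μ) + 1 / 2 * ∫ ω, normSq m (a ω - b ω) ∂μ ≤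
        (∫ ω, normSq m (b ω) ∂μ) + 2 * ∫ ω, normSq m (f ω) ∂μ := by
  have hfb_int := integrable_massInner hm hf hb hf_int hb_int
  have hrhs_int := (hb_int.add (hf_int.const_mul 2)).add (hfb_int.const_mul 2)
  have ha_meas : Measurable fun ω => normSq m (a ω) := (measurable_normSq m).comp ha
  have hdiff_meas : Measurable fun ω => 1 / 2 * normSq m (a ω - b ω) :=
    ((measurable_normSq m).comp (ha.sub hb)).const_mul _
  have ha_nonneg (ω : Ω) : 0 ≤ normSq m (a ω) := normSq_nonneg hm _
  have hdiff_nonneg (ω : Ω) : 0 ≤ 1 / 2 * normSq m (a ω - b ω) :=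
    mul_nonneg (by norm_num) (normSq_nonneg hm _)
  have hlhs_int : Integrable
      ((fun ω => normSq m (a ω)) + fun ω => 1 / 2 * normSq m (a ω - b ω)) μ := by
    refine hrhs_int.mono' (ha_meas.add hdiff_meas).aestronglyMeasurable ?_
    filter_upwards [henergy] with ω hω
    rw [Pi.add_apply, Real.norm_of_nonneg (add_nonneg (ha_nonneg ω) (hdiff_nonneg ω))]
    exact hω
  obtain ⟨ha_int, hdiff_int⟩ := (integrable_add_iff_of_nonneg ha_meas.aestronglyMeasurable
    (ae_of_all _ ha_nonneg) (ae_of_all _ hdiff_nonneg)).1 hlhs_int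
  refine ⟨ha_int, ?_⟩
  have hmean := integral_mono_ae hlhs_int hrhs_int henergy
  rwa [integral_add' ha_int hdiff_int,
    integral_add' (hb_int.add (hf_int.const_mul 2)) (hfb_int.const_mul 2),
    integral_add' hb_int (hf_int.const_mul 2), integral_const_mul, integral_const_mul,
    integral_const_mul, horth, mul_zero, add_zero] at hmean

end MeanSquare

lemma add_sum_range_le_of_discrete_gronwall {N : ℕ} {y D b c : ℕ → ℝ} (hy : ∀ n, 0 ≤ y n)
    (hD : ∀ n, 0 ≤ D n) (hb : ∀ n, 0 ≤ b n) (hc : ∀ n, 0 ≤ c n)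
    (hstep : ∀ n < N, y (n + 1) + D n ≤ (1 + c n) * y n + b n) :
    y N + ∑ n ∈ Finset.range N, D n ≤
      (y 0 + ∑ n ∈ Finset.range N, b n) * Real.exp (∑ n ∈ Finset.range N, c n) := by
  let z (n : ℕ) : ℝ := y n + ∑ k ∈ Finset.range n, D k
  have hz (n : ℕ) : 0 ≤ z n := add_nonneg (hy n) (Finset.sum_nonneg fun k _ => hD k)
  have hz_step (n : ℕ) (hn : n < N) : z (n + 1) ≤ (1 + c n) * z n + b n := by
    have hsum : 0 ≤ c n * ∑ k ∈ Finset.range n, D k :=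
      mul_nonneg (hc n) (Finset.sum_nonneg fun k _ => hD k)
    simp only [z, Finset.sum_range_succ]
    linarith [hstep n hn]
  -- `discrete_gronwall` wants the recurrence at all times, so `z` is stopped at time `N`.
  have hz_min (n : ℕ) : z (min (n + 1) N) ≤ (1 + c n) * z (min n N) + b n := by
    rcases lt_or_ge n N with hn | hn
    · rw [min_eq_left hn.le, min_eq_left (Nat.succ_le_of_lt hn)]
      exact hz_step n hn
    · rw [min_eq_right hn, min_eq_right (Nat.le_succ_of_le hn)]
      linarith [mul_nonneg (hc n) (hz N), hb n]
  simpa [z, ← Finset.range_eq_Ico] using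
    discrete_gronwall (u := fun n => z (min n N)) (hz _) (fun n _ => hz_min n)
      (fun n _ => hc n) (fun n _ => hb n) (Nat.zero_le N)

lemma integral_sq_eq_of_hasLaw_gaussianReal {Ω : Type*} [MeasurableSpace Ω] {μ : Measure Ω}
    {X : Ω → ℝ} {v : NNReal} (hX : HasLaw X (gaussianReal 0 v) μ) :
    ∫ ω, X ω ^ 2 ∂μ = v := by
  rw [← variance_of_integral_eq_zero hX.aemeasurable
    (hX.integral_eq.trans integral_id_gaussianReal), hX.variance_eq, variance_id_gaussianReal]

namespace Scheme

variable {V : Type} [Fintype V] [Nonempty V] {Ω : Type} [MeasurableSpace Ω] {T L : ℝ}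
  {g : ℝ → ℝ} {N n : ℕ} (S : Scheme V Ω T L g N)

include S

instance : IsProbabilityMeasure S.P :=
  S.probP

/-- The stochastic forcing `g(uⁿ) ΔWₙ₊₁` of the step from time `n` to time `n + 1`. -/
noncomputable def noise (n : ℕ) (ω : Ω) : V → ℝ :=
  S.ΔW (n + 1) ω • (g ∘ S.u n ω)

lemma timeStep_pos : 0 < T / N :=
  div_pos S.T_pos (Nat.cast_pos.2 S.N_pos)

lemma lipschitzWith : LipschitzWith L.toNNReal g :=
  LipschitzWith.of_dist_le' S.g_lip

lemma m_nonneg (K : V) : 0 ≤ S.m K :=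
  (S.m_pos K).le

lemma measurable_u (hn : n ≤ N) : Measurable (S.u n) :=
  (S.u_meas n hn).mono (S.G_le n) le_rfl

lemma measurable_comp_g : Measurable fun w : V → ℝ => g ∘ w :=
  measurable_comp_left S.lipschitzWith.continuous.measurable

lemma measurable_increment (hn : n < N) : Measurable (S.ΔW (n + 1)) :=
  (S.ΔW_meas n hn).mono (S.G_le (n + 1)) le_rfl

lemma measurable_noise (hn : n < N) : Measurable (S.noise n) :=
  (S.measurable_increment hn).smul (S.measurable_comp_g.comp (S.measurable_u hn.le))

lemma hasLaw_increment (hn : n < N) :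
    HasLaw (S.ΔW (n + 1)) (gaussianReal 0 (T / N).toNNReal) S.P :=
  ⟨(S.measurable_increment hn).aemeasurable, S.ΔW_law n hn⟩

lemma indepFun_increment_u (hn : n < N) : IndepFun (S.ΔW (n + 1)) (S.u n) S.P :=
  (IndepFun_iff_Indep _ _ _).2
    (indep_of_indep_of_le_right (S.ΔW_indep n hn) (S.u_meas n hn.le).comap_le)

lemma energy_inequality_ae (hn : n < N) :
    ∀ᵐ ω ∂S.P, normSq S.m (S.u (n + 1) ω) + 1 / 2 * normSq S.m (S.u (n + 1) ω - S.u n ω) ≤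
      normSq S.m (S.u n ω) + 2 * normSq S.m (S.noise n ω)
        + 2 * massInner S.m (S.noise n ω) (S.u n ω) := by
  filter_upwards [S.scheme n hn] with ω hω
  refine energy_inequality S.m_nonneg S.τ_symm S.τ_nonneg S.timeStep_pos fun K => ?_
  rw [hω K, noise, Pi.smul_apply, Function.comp_apply, smul_eq_mul]
  ring

lemma integral_massInner_noise (hn : n < N) :
    ∫ ω, massInner S.m (S.noise n ω) (S.u n ω) ∂S.P = 0 := by
  have hindep : IndepFun (S.ΔW (n + 1)) (fun ω => (g ∘ S.u n ω, S.u n ω)) S.P :=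
    (S.indepFun_increment_u hn).comp measurable_id (S.measurable_comp_g.prodMk measurable_id)
  have hmean : ∫ ω, S.ΔW (n + 1) ω ∂S.P = 0 :=
    (S.hasLaw_increment hn).integral_eq.trans integral_id_gaussianReal
  simp only [noise]
  rw [integral_massInner_smul_left hindep (S.measurable_increment hn).aestronglyMeasurable
    (S.measurable_comp_g.comp (S.measurable_u hn.le)) (S.measurable_u hn.le), hmean, zero_mul]

lemma indepFun_increment_comp_g (hn : n < N) :
    IndepFun (S.ΔW (n + 1)) (fun ω => g ∘ S.u n ω) S.P :=
  (S.indepFun_increment_u hn).comp measurable_id S.measurable_comp_g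

lemma integrable_normSq_noise (hn : n < N)
    (hu : Integrable (fun ω => normSq S.m (S.u n ω)) S.P) :
    Integrable (fun ω => normSq S.m (S.noise n ω)) S.P :=
  integrable_normSq_smul (S.indepFun_increment_comp_g hn)
    (S.hasLaw_increment hn).hasGaussianLaw.memLp_two
    (integrable_normSq_comp_of_lipschitzWith S.m_nonneg S.lipschitzWith (S.measurable_u hn.le) hu)

lemma integral_normSq_noise (hn : n < N) :
    ∫ ω, normSq S.m (S.noise n ω) ∂S.P = T / N * ∫ ω, normSq S.m (g ∘ S.u n ω) ∂S.P := by
  simp only [noise]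
  rw [integral_normSq_smul (S.indepFun_increment_comp_g hn)
    (S.measurable_increment hn).aestronglyMeasurable
    (S.measurable_comp_g.comp (S.measurable_u hn.le)),
    integral_sq_eq_of_hasLaw_gaussianReal (S.hasLaw_increment hn),
    Real.coe_toNNReal _ S.timeStep_pos.le]

lemma integrable_normSq_u_succ_and_integral_energy_le (hn : n < N)
    (hu : Integrable (fun ω => normSq S.m (S.u n ω)) S.P) :
    Integrable (fun ω => normSq S.m (S.u (n + 1) ω)) S.P ∧
      (∫ ω, normSq S.m (S.u (n + 1) ω) ∂S.P)
          + 1 / 2 * ∫ ω, normSq S.m (S.u (n + 1) ω - S.u n ω) ∂S.P ≤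
        (∫ ω, normSq S.m (S.u n ω) ∂S.P) + 2 * ∫ ω, normSq S.m (S.noise n ω) ∂S.P :=
  integrable_normSq_and_integral_energy_le S.m_nonneg (S.measurable_u hn)
    (S.measurable_u hn.le) (S.measurable_noise hn) hu (S.integrable_normSq_noise hn hu)
    (S.integral_massInner_noise hn) (S.energy_inequality_ae hn)

lemma integrable_normSq_u (hn : n ≤ N) : Integrable (fun ω => normSq S.m (S.u n ω)) S.P := by
  induction n with
  | zero => exact S.u0_int
  | succ n ih =>
    exact (S.integrable_normSq_u_succ_and_integral_energy_le hn (ih (Nat.le_of_succ_le hn))).1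

lemma integral_energy_succ_le (hn : n < N) :
    (∫ ω, normSq S.m (S.u (n + 1) ω) ∂S.P)
        + 1 / 2 * ∫ ω, normSq S.m (S.u (n + 1) ω - S.u n ω) ∂S.P ≤
      (1 + 4 * L ^ 2 * (T / N)) * (∫ ω, normSq S.m (S.u n ω) ∂S.P)
        + 4 * g 0 ^ 2 * (∑ K, S.m K) * (T / N) := by
  have hu := S.integrable_normSq_u hn.le
  have hmean := (S.integrable_normSq_u_succ_and_integral_energy_le hn hu).2
  have hgrowth := integral_normSq_comp_le_of_lipschitzWith S.m_nonneg S.lipschitzWith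
    (S.measurable_u hn.le) hu
  rw [Real.coe_toNNReal _ S.L_nonneg] at hgrowth
  rw [S.integral_normSq_noise hn] at hmean
  linarith [mul_le_mul_of_nonneg_left hgrowth S.timeStep_pos.le]

lemma energy_stability :
    (∫ ω, normSq S.m (S.u N ω) ∂S.P)
        + ∑ n ∈ Finset.range N, 1 / 2 * ∫ ω, normSq S.m (S.u (n + 1) ω - S.u n ω) ∂S.P ≤
      ((∫ ω, normSq S.m (S.u 0 ω) ∂S.P) + 4 * g 0 ^ 2 * (∑ K, S.m K) * T)
        * Real.exp (4 * L ^ 2 * T) := by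
  have hδ := S.timeStep_pos
  have hmass : 0 ≤ ∑ K, S.m K := Finset.sum_nonneg fun K _ => S.m_nonneg K
  have hmean_nonneg (w : Ω → V → ℝ) : 0 ≤ ∫ ω, normSq S.m (w ω) ∂S.P :=
    integral_nonneg fun ω => normSq_nonneg S.m_nonneg _
  have hsum_const (r : ℝ) : ∑ _n ∈ Finset.range N, r * (T / N) = r * T := by
    have hN : (N : ℝ) ≠ 0 := Nat.cast_ne_zero.2 (Nat.one_le_iff_ne_zero.1 S.N_pos)
    rw [Finset.sum_const, Finset.card_range, nsmul_eq_mul]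
    field_simp
  have hgronwall := add_sum_range_le_of_discrete_gronwall
    (y := fun n => ∫ ω, normSq S.m (S.u n ω) ∂S.P)
    (D := fun n => 1 / 2 * ∫ ω, normSq S.m (S.u (n + 1) ω - S.u n ω) ∂S.P)
    (b := fun _ => 4 * g 0 ^ 2 * (∑ K, S.m K) * (T / N)) (c := fun _ => 4 * L ^ 2 * (T / N))
    (fun _ => hmean_nonneg _) (fun _ => mul_nonneg (by norm_num) (hmean_nonneg _))
    (fun _ => by positivity) (fun _ => by positivity) (fun _ => S.integral_energy_succ_le)
  rwa [hsum_const, hsum_const] at hgronwall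

lemma sum_integral_normSq_increment_le :
    ∑ n ∈ Finset.range N, ∫ ω, normSq S.m (S.u (n + 1) ω - S.u n ω) ∂S.P ≤
      2 * (((∫ ω, normSq S.m (S.u 0 ω) ∂S.P) + 4 * g 0 ^ 2 * (∑ K, S.m K) * T)
        * Real.exp (4 * L ^ 2 * T)) := by
  have hstability := S.energy_stability
  have hterminal : 0 ≤ ∫ ω, normSq S.m (S.u N ω) ∂S.P :=
    integral_nonneg fun ω => normSq_nonneg S.m_nonneg _
  rw [← Finset.mul_sum] at hstability
  linarith

end Scheme

/-- **difference of the left and right time interpolants.** For all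
`T > 0`, `L ≥ 0`, `g₀ ≥ 0`, `A > 0`, `B ≥ 0` there is a constant `C ≥ 0`, depending
only on `T, L, g₀, A, B`, such that for every scheme (with `Σ m K ≤ A`, `|g 0| ≤ g₀`,
`E[‖u⁰‖_m²] ≤ B`):
`Δt · Σ_{n<N} E[‖u^{n+1} − u^n‖_m²] ≤ C·Δt`, i.e.
`E[∫₀^T ‖u^r(t) − u^l(t)‖_m² dt] ≤ C·Δt`. -/
theorem interpolant_difference_estimate (T L g₀ A B : ℝ)
    (hT : 0 < T) (hL : 0 ≤ L) (hg₀ : 0 ≤ g₀) (hA : 0 < A) (hB : 0 ≤ B) :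
    ∃ C : ℝ, 0 ≤ C ∧
      ∀ (V : Type) [Fintype V] [Nonempty V]
        (Ω : Type) [MeasurableSpace Ω] (g : ℝ → ℝ) (N : ℕ)
        (S : Scheme V Ω T L g N),
        |g 0| ≤ g₀ → (∑ K, S.m K) ≤ A →
        (∫ ω, normSq S.m (S.u 0 ω) ∂S.P) ≤ B →
        (T / N) * ∑ n ∈ Finset.range N,
            ∫ ω, normSq S.m (fun K => S.u (n + 1) ω K - S.u n ω K) ∂S.P
          ≤ C * (T / N) := by
  refine ⟨2 * ((B + 4 * g₀ ^ 2 * A * T) * Real.exp (4 * L ^ 2 * T)), by positivity, ?_⟩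
  intro V _ _ Ω _ g N S hg0 hmass hu0
  have hsource : 4 * g 0 ^ 2 * ∑ K, S.m K ≤ 4 * g₀ ^ 2 * A :=
    mul_le_mul (by linarith [sq_le_sq' (abs_le.1 hg0).1 (abs_le.1 hg0).2]) hmass
      (Finset.sum_nonneg fun K _ => S.m_nonneg K) (by positivity)
  rw [mul_comm]
  refine mul_le_mul_of_nonneg_right ?_ S.timeStep_pos.le
  refine S.sum_integral_normSq_increment_le.trans ?_
  gcongr
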